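/- arXiv:2001.01836 — 2 statements merged into one kernel-verified Lean document; each statement's English description precedes it below -/
import Mathlib

section
/- Assume φ0 and φ1 are continuous. Let J ⊆ (0,1) be an open interval and let h1, …, hn : J → ℝ be differentiable functions with h1(a) < h2(a) < … < hn(a) for all a ∈ J, satisfying the level-set condition a·p0·φ0(hi(a)) = (1−a)·p1·φ1(hi(a)) for every a ∈ J and every i ∈ {1,…,n}. Define f(a) = ∫_{H(h(a))} φ0 and g(a) = ∫_{ℝ∖H(h(a))} φ1, where H(h(a)) is the union of the odd-indexed pieces of the partition of ℝ induced by the thresholds h1(a) < … < hn(a) (i.e. (−∞,h1(a)) ∪ [h2(a),h3(a)) ∪ …). Then f and g are differentiable on J and their derivatives satisfy a·p0·f'(a) + (1−a)·p1·g'(a) = 0 for all a ∈ J; equivalently g'(a) = −(a·p0/((1−a)·p1))·f'(a). -/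
/-!
For increasing thresholds, the thresholds at most `y` are the first `k` of them, and
`1 - ∑ i < k, (-1)^i` is `1` or `0` according to the parity of `k`. Hence the indicator of
`oddUnion t` is `1` minus the alternating sum of the indicators of the half-lines `[t i, ∞)`, and
`∫ y in oddUnion t, φ y` is `∫ y, φ y` minus an alternating sum of tail integrals. By the
fundamental theorem of calculus and the chain rule, moving the thresholds changes it at the rate
`∑ i, (-1)^i h_i' φ(h_i)`, while the integral over the complement changes at the opposite rate. The
level-set condition makes the two weighted rates cancel term by term.
-/

open MeasureTheory Real Set Filter

/-- The union of the odd-indexed pieces of the partition of ℝ induced by the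
thresholds `h 0 < h 1 < ⋯ < h (n-1)`, i.e. `(-∞, h 0) ∪ [h 1, h 2) ∪ ⋯`:
a point `y` belongs to it iff the number of thresholds `≤ y` is even. -/
def oddUnion {n : ℕ} (h : Fin n → ℝ) : Set ℝ :=
  {y | Even (Finset.univ.filter (fun i => h i ≤ y)).card}

theorem eq_range_card_of_isLowerSet {s : Finset ℕ} (hs : IsLowerSet (s : Set ℕ)) :
    s = Finset.range s.card := by
  refine Finset.eq_of_subset_of_card_le (fun x hx => ?_) (Finset.card_range _).le
  have hsub : Finset.range (x + 1) ⊆ s := fun y hy => hs (Finset.mem_range_succ_iff.1 hy) hx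
  simpa only [Finset.card_range, Nat.succ_le_iff, Finset.mem_range] using Finset.card_le_card hsub

theorem sum_eq_sum_range_card_of_isLowerSet {M : Type*} [AddCommMonoid M] {n : ℕ}
    {s : Finset (Fin n)} (hs : IsLowerSet (s : Set (Fin n))) (f : ℕ → M) :
    ∑ i ∈ s, f i = ∑ k ∈ Finset.range s.card, f k := by
  have hmap : IsLowerSet (s.map Fin.valEmbedding : Set ℕ) := by
    intro x y hyx hx
    obtain ⟨i, hi, rfl⟩ := Finset.mem_map.1 hx
    exact Finset.mem_map.2 ⟨⟨y, hyx.trans_lt i.isLt⟩, hs hyx hi, rfl⟩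
  calc ∑ i ∈ s, f i
      = ∑ k ∈ s.map Fin.valEmbedding, f k := (Finset.sum_map s Fin.valEmbedding f).symm
    _ = ∑ k ∈ Finset.range s.card, f k := by
        rw [eq_range_card_of_isLowerSet hmap, Finset.card_map]

theorem measurableSet_oddUnion {n : ℕ} (t : Fin n → ℝ) : MeasurableSet (oddUnion t) := by
  have hcard : Measurable fun y : ℝ => (Finset.univ.filter fun i => t i ≤ y).card := by
    simp only [Finset.card_filter]
    exact Finset.measurable_sum _ fun i _ =>
      Measurable.ite measurableSet_Ici measurable_const measurable_const
  exact hcard (MeasurableSet.of_discrete (s := {k : ℕ | Even k}))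

theorem indicator_oddUnion (R : Type*) {M : Type*} [Ring R] [AddCommGroup M] [Module R M] {n : ℕ}
    {t : Fin n → ℝ} (ht : Monotone t) (φ : ℝ → M) (y : ℝ) :
    (oddUnion t).indicator φ y =
      φ y - ∑ i : Fin n, (-1 : R) ^ (i : ℕ) • (Ici (t i)).indicator φ y := by
  have hlower : IsLowerSet (Finset.univ.filter fun i => t i ≤ y : Set (Fin n)) := by
    intro i j hji hi
    simp only [Finset.coe_filter_univ, mem_ofPred_eq] at hi ⊢
    exact (ht hji).trans hi
  have hsum : ∑ i : Fin n, (-1 : R) ^ (i : ℕ) • (Ici (t i)).indicator φ y =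
      (if Even (Finset.univ.filter fun i => t i ≤ y).card then (0 : R) else 1) • φ y := by
    rw [← neg_one_geom_sum, ← sum_eq_sum_range_card_of_isLowerSet hlower, Finset.sum_smul,
      Finset.sum_filter]
    simp only [indicator_apply, mem_Ici, smul_ite, smul_zero]
  rw [hsum]
  by_cases hy : Even (Finset.univ.filter fun i => t i ≤ y).card
  · rw [indicator_of_mem (show y ∈ oddUnion t from hy), if_pos hy, zero_smul, sub_zero]
  · rw [indicator_of_notMem (show y ∉ oddUnion t from hy), if_neg hy, one_smul, sub_self]

section Integral

variable {E : Type*} [NormedAddCommGroup E] [NormedSpace ℝ E]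

theorem setIntegral_oddUnion {μ : Measure ℝ} {n : ℕ} {t : Fin n → ℝ} (ht : Monotone t)
    {φ : ℝ → E} (hφ : Integrable φ μ) :
    ∫ y in oddUnion t, φ y ∂μ =
      (∫ y, φ y ∂μ) - ∑ i : Fin n, (-1 : ℝ) ^ (i : ℕ) • ∫ y in Ici (t i), φ y ∂μ := by
  have htail (i : Fin n) :
      Integrable (fun y => (-1 : ℝ) ^ (i : ℕ) • (Ici (t i)).indicator φ y) μ :=
    (hφ.indicator measurableSet_Ici).smul _
  calc ∫ y in oddUnion t, φ y ∂μ
      = ∫ y, (φ y - ∑ i : Fin n, (-1 : ℝ) ^ (i : ℕ) • (Ici (t i)).indicator φ y) ∂μ := by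
        simp only [← integral_indicator (measurableSet_oddUnion t), indicator_oddUnion ℝ ht]
    _ = (∫ y, φ y ∂μ) - ∑ i : Fin n, (-1 : ℝ) ^ (i : ℕ) • ∫ y in Ici (t i), φ y ∂μ := by
        rw [integral_sub hφ (integrable_finsetSum _ fun i _ => htail i),
          integral_finsetSum _ fun i _ => htail i]
        simp only [integral_smul, integral_indicator measurableSet_Ici]

variable [CompleteSpace E]

theorem hasDerivAt_setIntegral_Ici {φ : ℝ → E} (hφ : Integrable φ) {x : ℝ}
    (hc : ContinuousAt φ x) : HasDerivAt (fun x => ∫ y in Ici x, φ y) (-φ x) x := by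
  have htail (x : ℝ) : ∫ y in Ici x, φ y = (∫ y in Ioi (0 : ℝ), φ y) - ∫ y in (0 : ℝ)..x, φ y := by
    rw [integral_Ici_eq_integral_Ioi, eq_sub_iff_add_eq', intervalIntegral.integral_interval_add_Ioi
      hφ.integrableOn hφ.integrableOn]
  simp only [htail]
  exact (intervalIntegral.integral_hasDerivAt_right hφ.intervalIntegrable
    hφ.aestronglyMeasurable.stronglyMeasurableAtFilter hc).const_sub _

section MovingThresholds

variable {φ : ℝ → E} {n : ℕ} {h : Fin n → ℝ → ℝ} {h' : Fin n → ℝ} {a : ℝ}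

theorem hasDerivAt_setIntegral_oddUnion (hφ : Integrable φ) (hc : ∀ i, ContinuousAt φ (h i a))
    (hh : ∀ i, HasDerivAt (h i) (h' i) a) (hmono : ∀ᶠ b in nhds a, Monotone fun i => h i b) :
    HasDerivAt (fun b => ∫ y in oddUnion (fun i => h i b), φ y)
      (∑ i : Fin n, (-1 : ℝ) ^ (i : ℕ) • h' i • φ (h i a)) a := by
  have htail (i : Fin n) : HasDerivAt (fun b => ∫ y in Ici (h i b), φ y) (h' i • -φ (h i a)) a :=
    (hasDerivAt_setIntegral_Ici hφ (hc i)).scomp a (hh i)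
  have hsum : HasDerivAt
      (fun b => (∫ y, φ y) - ∑ i : Fin n, (-1 : ℝ) ^ (i : ℕ) • ∫ y in Ici (h i b), φ y)
      (∑ i : Fin n, (-1 : ℝ) ^ (i : ℕ) • h' i • φ (h i a)) a := by
    refine ((HasDerivAt.fun_sum fun i _ =>
      (htail i).fun_const_smul ((-1 : ℝ) ^ (i : ℕ))).const_sub _).congr_deriv ?_
    simp only [smul_neg, Finset.sum_neg_distrib, neg_neg]
  exact hsum.congr_of_eventuallyEq (hmono.mono fun b hb => setIntegral_oddUnion hb hφ)

theorem hasDerivAt_setIntegral_compl_oddUnion (hφ : Integrable φ)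
    (hc : ∀ i, ContinuousAt φ (h i a)) (hh : ∀ i, HasDerivAt (h i) (h' i) a)
    (hmono : ∀ᶠ b in nhds a, Monotone fun i => h i b) :
    HasDerivAt (fun b => ∫ y in (oddUnion (fun i => h i b))ᶜ, φ y)
      (-∑ i : Fin n, (-1 : ℝ) ^ (i : ℕ) • h' i • φ (h i a)) a := by
  simp only [setIntegral_compl (measurableSet_oddUnion _) hφ]
  exact (hasDerivAt_setIntegral_oddUnion hφ hc hh hmono).const_sub _

end MovingThresholds

theorem stmt_6_general {φ0 φ1 : ℝ → E} (hi0 : Integrable φ0) (hi1 : Integrable φ1)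
    {J : Set ℝ} (hJ : IsOpen J) {n : ℕ} {h : Fin n → ℝ → ℝ}
    (hc0 : ∀ a ∈ J, ∀ i, ContinuousAt φ0 (h i a)) (hc1 : ∀ a ∈ J, ∀ i, ContinuousAt φ1 (h i a))
    (hdiff : ∀ i, ∀ a ∈ J, DifferentiableAt ℝ (h i) a)
    (hmono : ∀ a ∈ J, Monotone fun i => h i a) {w0 w1 : ℝ → ℝ}
    (hlevel : ∀ a ∈ J, ∀ i, w0 a • φ0 (h i a) = w1 a • φ1 (h i a)) :
    DifferentiableOn ℝ (fun a => ∫ y in oddUnion (fun i => h i a), φ0 y) J ∧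
    DifferentiableOn ℝ (fun a => ∫ y in (oddUnion (fun i => h i a))ᶜ, φ1 y) J ∧
    ∀ a ∈ J,
      w0 a • deriv (fun a => ∫ y in oddUnion (fun i => h i a), φ0 y) a +
        w1 a • deriv (fun a => ∫ y in (oddUnion (fun i => h i a))ᶜ, φ1 y) a = 0 := by
  have hmono_near (a) (ha : a ∈ J) : ∀ᶠ b in nhds a, Monotone fun i => h i b :=
    (hJ.eventually_mem ha).mono hmono
  have hf (a) (ha : a ∈ J) := hasDerivAt_setIntegral_oddUnion hi0 (hc0 a ha)
    (fun i => (hdiff i a ha).hasDerivAt) (hmono_near a ha)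
  have hg (a) (ha : a ∈ J) := hasDerivAt_setIntegral_compl_oddUnion hi1 (hc1 a ha)
    (fun i => (hdiff i a ha).hasDerivAt) (hmono_near a ha)
  refine ⟨fun a ha => (hf a ha).differentiableAt.differentiableWithinAt,
    fun a ha => (hg a ha).differentiableAt.differentiableWithinAt, fun a ha => ?_⟩
  have hcancel (i : Fin n) : w0 a • (-1 : ℝ) ^ (i : ℕ) • deriv (h i) a • φ0 (h i a) =
      w1 a • (-1 : ℝ) ^ (i : ℕ) • deriv (h i) a • φ1 (h i a) := by
    simp only [smul_comm (w0 a), smul_comm (w1 a), hlevel a ha i]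
  rw [(hf a ha).deriv, (hg a ha).deriv, smul_neg, add_neg_eq_zero, Finset.smul_sum,
    Finset.smul_sum]
  exact Finset.sum_congr rfl fun i _ => hcancel i

end Integral

/-- along a differentiable family of level-set thresholds
`h i a` satisfying `a·p0·φ0(h i a) = (1-a)·p1·φ1(h i a)`, the functions
`f(a) = ∫_{H(h(a))} φ0` and `g(a) = ∫_{ℝ∖H(h(a))} φ1` are differentiable on the
open interval `J ⊆ (0,1)` and satisfy `a·p0·f'(a) + (1-a)·p1·g'(a) = 0`. -/
theorem stmt_6
    (p0 p1 : ℝ) (hp0 : p0 ∈ Set.Ioo (0:ℝ) 1) (hp1 : p1 ∈ Set.Ioo (0:ℝ) 1)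
    (hp : p0 + p1 = 1)
    (φ0 φ1 : ℝ → ℝ) (hφ0 : ∀ y, 0 ≤ φ0 y) (hφ1 : ∀ y, 0 ≤ φ1 y)
    (hi0 : Integrable φ0) (hi1 : Integrable φ1)
    (hI0 : ∫ y, φ0 y = 1) (hI1 : ∫ y, φ1 y = 1)
    (hc0 : Continuous φ0) (hc1 : Continuous φ1)
    (c d : ℝ) (J : Set ℝ) (hJ : J = Set.Ioo c d) (hJsub : J ⊆ Set.Ioo 0 1)
    (n : ℕ) (h : Fin n → ℝ → ℝ)
    (hdiff : ∀ i, ∀ a ∈ J, DifferentiableAt ℝ (h i) a)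
    (horder : ∀ a ∈ J, StrictMono (fun i => h i a))
    (hlevel : ∀ a ∈ J, ∀ i, a * p0 * φ0 (h i a) = (1 - a) * p1 * φ1 (h i a)) :
    DifferentiableOn ℝ (fun a => ∫ y in oddUnion (fun i => h i a), φ0 y) J ∧
    DifferentiableOn ℝ (fun a => ∫ y in (oddUnion (fun i => h i a))ᶜ, φ1 y) J ∧
    ∀ a ∈ J,
      a * p0 * deriv (fun a => ∫ y in oddUnion (fun i => h i a), φ0 y) a +
        (1 - a) * p1 * deriv (fun a => ∫ y in (oddUnion (fun i => h i a))ᶜ, φ1 y) a = 0 := by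
  exact stmt_6_general hi0 hi1 (hJ ▸ isOpen_Ioo) (fun _ _ _ => hc0.continuousAt)
    (fun _ _ _ => hc1.continuousAt) hdiff (fun a ha => (horder a ha).monotone) hlevel
end

section
/- Let p0, p1 ∈ (0,1) with p0 + p1 = 1 and let f, g : (0,1) → (0,1) be differentiable functions satisfying f'(a) = −(a·p0/((1−a)·p1))·g'(a) for all a ∈ (0,1). Define the mutual information I(a) = H_b(p0·f(a) + p1·(1−g(a))) − p0·H_b(f(a)) − p1·H_b(g(a)) and F(a) = log(f(a)/(1−f(a))) + (p1²·(a−1)/(p0²·a))·log(g(a)/(1−g(a))) − ((p0²·a + p1²·(1−a))/(p0²·a))·log((p0·f(a) + p1·(1−g(a)))/(p0·(1−f(a)) + p1·g(a))). Then I is differentiable and I'(a) = p0·f'(a)·F(a) for all a ∈ (0,1). -/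
/-- Binary entropy function. -/
noncomputable def Hb (w : ℝ) : ℝ := -(w * Real.log w) - (1 - w) * Real.log (1 - w)

/-- The mutual information as a function of the posterior level `a`. -/
noncomputable def Iq (p0 p1 : ℝ) (f g : ℝ → ℝ) (a : ℝ) : ℝ :=
  Hb (p0 * f a + p1 * (1 - g a)) - p0 * Hb (f a) - p1 * Hb (g a)

/-- The function `F` whose zero characterizes the stationary points of the mutual
information as a function of the posterior level `a`. -/
noncomputable def Fq (p0 p1 : ℝ) (f g : ℝ → ℝ) (a : ℝ) : ℝ :=
  Real.log (f a / (1 - f a)) +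
    (p1 ^ 2 * (a - 1) / (p0 ^ 2 * a)) * Real.log (g a / (1 - g a)) -
    ((p0 ^ 2 * a + p1 ^ 2 * (1 - a)) / (p0 ^ 2 * a)) *
      Real.log ((p0 * f a + p1 * (1 - g a)) / (p0 * (1 - f a) + p1 * g a))

/-!
With `q` the output probability, the chain rule gives
`I' = p0 f' (logOdds f - logOdds q) + p1 g' (logOdds g + logOdds q)`. The relation between the
derivatives says `p1 g' = p0 f' r` with `r = p1² (a - 1) / (p0² a)`. Since the last coefficient
of `F` is `1 - r`, factoring out `p0 f'` leaves exactly `F`.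
-/

/-- The log-odds (logit) of a probability `w`, which is minus the derivative of the binary entropy.
It is meaningful for `0 < w < 1`; elsewhere it takes the default values of `Real.log` and `/`. -/
noncomputable def logOdds (w : ℝ) : ℝ := Real.log (w / (1 - w))

/-- The probability of output `0` of the binary channel with diagonal entries `u`, `v` and input
probabilities `p0`, `p1`; the argument of the output entropy in the mutual information. -/
def outputProb (p0 p1 u v : ℝ) : ℝ := p0 * u + p1 * (1 - v)

theorem Hb_eq_binEntropy : Hb = Real.binEntropy := by
  ext w
  rw [Hb, Real.binEntropy, Real.log_inv, Real.log_inv]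
  ring

theorem hasDerivAt_Hb {w : ℝ} (hw0 : w ≠ 0) (hw1 : w ≠ 1) : HasDerivAt Hb (-logOdds w) w := by
  rw [Hb_eq_binEntropy, logOdds, Real.log_div hw0 (sub_ne_zero.mpr hw1.symm), neg_sub]
  exact Real.hasDerivAt_binEntropy hw0 hw1

theorem hasDerivAt_Hb_comp {u : ℝ → ℝ} {u' a : ℝ} (hu : HasDerivAt u u' a)
    (hu_mem : u a ∈ Set.Ioo (0 : ℝ) 1) :
    HasDerivAt (fun x => Hb (u x)) (-logOdds (u a) * u') a :=
  (hasDerivAt_Hb hu_mem.1.ne' hu_mem.2.ne).comp a hu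

theorem outputProb_mem_Ioo {p0 p1 u v : ℝ} (hp0 : 0 ≤ p0) (hp1 : 0 ≤ p1) (hp : p0 + p1 = 1)
    (hu : u ∈ Set.Ioo (0 : ℝ) 1) (hv : v ∈ Set.Ioo (0 : ℝ) 1) :
    outputProb p0 p1 u v ∈ Set.Ioo (0 : ℝ) 1 :=
  convex_Ioo 0 1 hu ⟨sub_pos.mpr hv.2, sub_lt_self 1 hv.1⟩ hp0 hp1 hp

theorem one_sub_outputProb {p0 p1 : ℝ} (hp : p0 + p1 = 1) (u v : ℝ) :
    1 - outputProb p0 p1 u v = p0 * (1 - u) + p1 * v := by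
  rw [outputProb]
  linear_combination -hp

section

variable {p0 p1 a f' g' : ℝ} {f g : ℝ → ℝ}

theorem hasDerivAt_outputProb (p0 p1 : ℝ) (hf : HasDerivAt f f' a) (hg : HasDerivAt g g' a) :
    HasDerivAt (fun x => outputProb p0 p1 (f x) (g x)) (p0 * f' + p1 * -g') a :=
  (hf.const_mul p0).add ((hg.const_sub 1).const_mul p1)

theorem hasDerivAt_Iq (hp0 : 0 ≤ p0) (hp1 : 0 ≤ p1) (hp : p0 + p1 = 1)
    (hf_mem : f a ∈ Set.Ioo (0 : ℝ) 1) (hg_mem : g a ∈ Set.Ioo (0 : ℝ) 1)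
    (hf : HasDerivAt f f' a) (hg : HasDerivAt g g' a) :
    HasDerivAt (Iq p0 p1 f g)
      (p0 * f' * (logOdds (f a) - logOdds (outputProb p0 p1 (f a) (g a))) +
        p1 * g' * (logOdds (g a) + logOdds (outputProb p0 p1 (f a) (g a)))) a := by
  have h_output := hasDerivAt_Hb_comp (hasDerivAt_outputProb p0 p1 hf hg)
    (outputProb_mem_Ioo hp0 hp1 hp hf_mem hg_mem)
  have h_f := (hasDerivAt_Hb_comp hf hf_mem).const_mul p0
  have h_g := (hasDerivAt_Hb_comp hg hg_mem).const_mul p1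
  exact ((h_output.sub h_f).sub h_g).congr_deriv (by ring)

theorem Fq_eq_logOdds (hp0 : p0 ≠ 0) (hp : p0 + p1 = 1) (ha : a ≠ 0) (f g : ℝ → ℝ) :
    Fq p0 p1 f g a =
      (logOdds (f a) - logOdds (outputProb p0 p1 (f a) (g a))) +
        p1 ^ 2 * (a - 1) / (p0 ^ 2 * a) *
          (logOdds (g a) + logOdds (outputProb p0 p1 (f a) (g a))) := by
  have last_coeff : (p0 ^ 2 * a + p1 ^ 2 * (1 - a)) / (p0 ^ 2 * a) =
      1 - p1 ^ 2 * (a - 1) / (p0 ^ 2 * a) := by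
    field_simp
    ring
  rw [Fq, last_coeff, ← one_sub_outputProb hp]
  simp only [logOdds, outputProb]
  ring

theorem mul_Fq_eq_logOdds (hp0 : p0 ≠ 0) (hp1 : p1 ≠ 0) (hp : p0 + p1 = 1)
    (ha0 : a ≠ 0) (ha1 : a ≠ 1) (hrel : f' = -(a * p0 / ((1 - a) * p1)) * g') (f g : ℝ → ℝ) :
    p0 * f' * Fq p0 p1 f g a =
      p0 * f' * (logOdds (f a) - logOdds (outputProb p0 p1 (f a) (g a))) +
        p1 * g' * (logOdds (g a) + logOdds (outputProb p0 p1 (f a) (g a))) := by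
  have weighted_rel : p1 * g' = p0 * f' * (p1 ^ 2 * (a - 1) / (p0 ^ 2 * a)) := by
    have one_sub_ne : 1 - a ≠ 0 := sub_ne_zero.mpr ha1.symm
    rw [hrel]
    field_simp
    ring
  rw [Fq_eq_logOdds hp0 hp ha0, weighted_rel]
  ring

end

/-- `I` is differentiable on `(0,1)` with `I'(a) = p0·f'(a)·F(a)`. -/
theorem stmt_13
    (p0 p1 : ℝ) (hp0 : p0 ∈ Set.Ioo (0:ℝ) 1) (hp1 : p1 ∈ Set.Ioo (0:ℝ) 1)
    (hp : p0 + p1 = 1)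
    (f g f' g' : ℝ → ℝ)
    (hfmem : ∀ a ∈ Set.Ioo (0:ℝ) 1, f a ∈ Set.Ioo (0:ℝ) 1)
    (hgmem : ∀ a ∈ Set.Ioo (0:ℝ) 1, g a ∈ Set.Ioo (0:ℝ) 1)
    (hfd : ∀ a ∈ Set.Ioo (0:ℝ) 1, HasDerivAt f (f' a) a)
    (hgd : ∀ a ∈ Set.Ioo (0:ℝ) 1, HasDerivAt g (g' a) a)
    (hrel : ∀ a ∈ Set.Ioo (0:ℝ) 1, f' a = -(a * p0 / ((1 - a) * p1)) * g' a) :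
    ∀ a ∈ Set.Ioo (0:ℝ) 1,
      HasDerivAt (Iq p0 p1 f g) (p0 * f' a * Fq p0 p1 f g a) a := by
  intro a ha
  have hI := hasDerivAt_Iq hp0.1.le hp1.1.le hp (hfmem a ha) (hgmem a ha) (hfd a ha) (hgd a ha)
  have hF := mul_Fq_eq_logOdds hp0.1.ne' hp1.1.ne' hp ha.1.ne' ha.2.ne (hrel a ha) f g
  exact hI.congr_deriv hF.symm
end
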